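/- arXiv:2006.06782 — 8 statements merged into one kernel-verified Lean document; each statement's English description precedes it below -/
import Mathlib

section
/- Let f_1, …, f_n : ℝ^d → ℝ be differentiable, each f_i convex and L_i-smooth (‖∇f_i(u) − ∇f_i(v)‖ ≤ L_i‖u − v‖ for all u, v), let L_max = max_i L_i, and suppose f = (1/n)·Σ_{i=1}^n f_i is m-strongly convex (m > 0) with minimizer x⋆. Fix x ∈ ℝ^d and a batch size b ≥ 1, let k_1, …, k_b be i.i.d. uniform random indices in {1, …, n}, and set ∇̂f(x) = (1/b)·Σ_{j=1}^b ∇f_{k_j}(x). Then E‖∇̂f(x) − ∇f(x)‖² ≤ (2L_max/(b·m))·‖∇f(x)‖² + (2/(b·n))·Σ_{i=1}^n ‖∇f_i(x⋆)‖². -/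
open Finset
open scoped InnerProductSpace

lemma descent_aux {E : Type*} [NormedAddCommGroup E] [InnerProductSpace ℝ E] [CompleteSpace E]
    (g : E → ℝ) (g' : E → E) (hgrad : ∀ u, HasGradientAt g (g' u) u) (L : ℝ)
    (hs : ∀ u v, ‖g' u - g' v‖ ≤ L * ‖u - v‖) (u w : E) :
    g (u + w) ≤ g u + ⟪g' u, w⟫_ℝ + L / 2 * ‖w‖ ^ 2 := by
  have hd : ∀ t : ℝ, HasDerivAt
      (fun t : ℝ => g (u + t • w) - t * ⟪g' u, w⟫_ℝ - t ^ 2 * (L / 2 * ‖w‖ ^ 2))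
      (⟪g' (u + t • w), w⟫_ℝ - ⟪g' u, w⟫_ℝ - 2 * t * (L / 2 * ‖w‖ ^ 2)) t := by
    intro t
    have h1 : HasDerivAt (fun t : ℝ => u + t • w) w t := by
      simpa using ((hasDerivAt_id t).smul_const w).const_add u
    have h2 := (hgrad (u + t • w)).hasFDerivAt.comp_hasDerivAt t h1
    have h3 := (hasDerivAt_id t).mul_const ⟪g' u, w⟫_ℝ
    have h4 := (hasDerivAt_pow 2 t).mul_const (L / 2 * ‖w‖ ^ 2)
    have h5 := (h2.sub h3).sub h4
    refine h5.congr_deriv ?_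
    simp
  have hanti : AntitoneOn
      (fun t : ℝ => g (u + t • w) - t * ⟪g' u, w⟫_ℝ - t ^ 2 * (L / 2 * ‖w‖ ^ 2))
      (Set.Icc 0 1) := by
    apply antitoneOn_of_deriv_nonpos (convex_Icc 0 1)
    · exact fun t _ => (hd t).continuousAt.continuousWithinAt
    · exact fun t _ => (hd t).differentiableAt.differentiableWithinAt
    · intro t ht
      rw [interior_Icc] at ht
      rw [(hd t).deriv]
      have h1 : ⟪g' (u + t • w) - g' u, w⟫_ℝ ≤ ‖g' (u + t • w) - g' u‖ * ‖w‖ :=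
        real_inner_le_norm _ _
      have h2 := hs (u + t • w) u
      rw [add_sub_cancel_left, norm_smul, Real.norm_of_nonneg ht.1.le] at h2
      rw [inner_sub_left] at h1
      have h3 := mul_le_mul_of_nonneg_right h2 (norm_nonneg w)
      nlinarith
  have h := hanti (Set.left_mem_Icc.2 zero_le_one) (Set.right_mem_Icc.2 zero_le_one) zero_le_one
  simp at h
  linarith

lemma cocoercive_half {E : Type*} [NormedAddCommGroup E] [InnerProductSpace ℝ E] [CompleteSpace E]
    (g : E → ℝ) (g' : E → E) (hgrad : ∀ u, HasGradientAt g (g' u) u) (L : ℝ) (hL : 0 < L)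
    (hconv : ∀ u v, g u + ⟪g' u, v - u⟫_ℝ ≤ g v)
    (hs : ∀ u v, ‖g' u - g' v‖ ≤ L * ‖u - v‖) (x y : E) :
    g x + ⟪g' x, y - x⟫_ℝ + (2 * L)⁻¹ * ‖g' x - g' y‖ ^ 2 ≤ g y := by
  have h1 := descent_aux g g' hgrad L hs y (L⁻¹ • (g' x - g' y))
  have h2 := hconv x (y + L⁻¹ • (g' x - g' y))
  have e : y + L⁻¹ • (g' x - g' y) - x = (y - x) + L⁻¹ • (g' x - g' y) := by abel
  rw [e, inner_add_right] at h2
  have h3 : ⟪g' x, L⁻¹ • (g' x - g' y)⟫_ℝ - ⟪g' y, L⁻¹ • (g' x - g' y)⟫_ℝ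
      = L⁻¹ * ‖g' x - g' y‖ ^ 2 := by
    rw [← inner_sub_left, inner_smul_right, real_inner_self_eq_norm_sq]
  have h4 : L / 2 * ‖L⁻¹ • (g' x - g' y)‖ ^ 2 = (2 * L)⁻¹ * ‖g' x - g' y‖ ^ 2 := by
    rw [norm_smul, Real.norm_of_nonneg (inv_pos.2 hL).le]
    field_simp
  have h5 : L⁻¹ * ‖g' x - g' y‖ ^ 2 = 2 * ((2 * L)⁻¹ * ‖g' x - g' y‖ ^ 2) := by
    field_simp
  linarith

lemma cocoercive {E : Type*} [NormedAddCommGroup E] [InnerProductSpace ℝ E] [CompleteSpace E]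
    (g : E → ℝ) (g' : E → E) (hgrad : ∀ u, HasGradientAt g (g' u) u) (L : ℝ)
    (hconv : ∀ u v, g u + ⟪g' u, v - u⟫_ℝ ≤ g v)
    (hs : ∀ u v, ‖g' u - g' v‖ ≤ L * ‖u - v‖) (x y : E) :
    ‖g' x - g' y‖ ^ 2 ≤ L * ⟪g' x - g' y, x - y⟫_ℝ := by
  rcases lt_or_ge 0 L with hL | hL
  · have h1 := cocoercive_half g g' hgrad L hL hconv hs x y
    have h2 := cocoercive_half g g' hgrad L hL hconv hs y x
    rw [norm_sub_rev (g' y), ← neg_sub y x, inner_neg_right] at h2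
    rw [← neg_sub y x, inner_neg_right, inner_sub_left]
    have h5 : ‖g' x - g' y‖ ^ 2 = L * (2 * ((2 * L)⁻¹ * ‖g' x - g' y‖ ^ 2)) := by
      field_simp
    rw [h5]
    apply mul_le_mul_of_nonneg_left _ hL.le
    linarith
  · have h := hs x y
    have h0 : L * ‖x - y‖ ≤ 0 := mul_nonpos_of_nonpos_of_nonneg hL (norm_nonneg _)
    have : g' x - g' y = 0 := norm_le_zero_iff.1 (h.trans h0)
    simp [this]

lemma sum_batch {E : Type*} [NormedAddCommGroup E] [InnerProductSpace ℝ E]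
    (n : ℕ) (a : Fin n → E) (ha : ∑ i, a i = 0) (b : ℕ) :
    (n : ℝ) * ∑ σ : Fin b → Fin n, ‖∑ j, a (σ j)‖ ^ 2
      = b * (n : ℝ) ^ b * ∑ i, ‖a i‖ ^ 2 := by
  induction b with
  | zero => simp
  | succ b ih =>
    have key : ∑ σ : Fin (b + 1) → Fin n, ‖∑ j, a (σ j)‖ ^ 2
        = (n : ℝ) ^ b * ∑ i, ‖a i‖ ^ 2
          + n * ∑ σ : Fin b → Fin n, ‖∑ j, a (σ j)‖ ^ 2 := by
      rw [← (Fin.consEquiv (fun _ => Fin n)).sum_comp, Fintype.sum_prod_type]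
      simp only [Fin.consEquiv_apply, Fin.sum_univ_succ, Fin.cons_zero, Fin.cons_succ,
        norm_add_sq_real, Finset.sum_add_distrib, ← Finset.mul_sum, ← inner_sum, ← sum_inner, ha]
      simp [Finset.mul_sum]
    rw [key, mul_add, ih]
    push_cast
    ring

/-- **Growth condition for the mini-batch stochastic gradient in ERM.**
For `f = (1/n) Σ f_i` with each `f_i` convex and `L_i`-smooth, `f` `m`-strongly
convex with minimizer `x⋆`, and a mini-batch gradient estimator built from `b`
i.i.d. uniform indices (so that the expectation is the uniform average over all
`n^b` index tuples), the variance satisfies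
`E‖∇̂f(x) - ∇f(x)‖² ≤ (2 L_max/(b m)) ‖∇f(x)‖² + (2/(b n)) Σ_i ‖∇f_i(x⋆)‖²`. -/
theorem minibatch_growth_condition
    {d : ℕ} (n : ℕ) (hn : 0 < n)
    (g : Fin n → EuclideanSpace ℝ (Fin d) → ℝ)
    (g' : Fin n → EuclideanSpace ℝ (Fin d) → EuclideanSpace ℝ (Fin d))
    (hgrad : ∀ i u, HasGradientAt (g i) (g' i u) u)
    (Li : Fin n → ℝ) (Lmax : ℝ)
    (hLmax : IsGreatest (Set.range Li) Lmax)
    (hconv : ∀ i u v, g i u + ⟪g' i u, v - u⟫_ℝ ≤ g i v)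
    (hsmooth : ∀ i u v, ‖g' i u - g' i v‖ ≤ Li i * ‖u - v‖)
    (f : EuclideanSpace ℝ (Fin d) → ℝ)
    (hf : ∀ u, f u = (n : ℝ)⁻¹ * ∑ i, g i u)
    (m : ℝ) (hm : 0 < m)
    (hsc : ∀ u v, f u + ⟪(n : ℝ)⁻¹ • ∑ i, g' i u, v - u⟫_ℝ + m / 2 * ‖v - u‖ ^ 2 ≤ f v)
    (xstar : EuclideanSpace ℝ (Fin d)) (hstar : ∀ v, f xstar ≤ f v)
    (x : EuclideanSpace ℝ (Fin d)) (b : ℕ) (hb : 1 ≤ b) :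
    ((n : ℝ) ^ b)⁻¹ *
        ∑ σ : Fin b → Fin n,
          ‖(b : ℝ)⁻¹ • (∑ j, g' (σ j) x) - (n : ℝ)⁻¹ • ∑ i, g' i x‖ ^ 2 ≤
      2 * Lmax / (b * m) * ‖(n : ℝ)⁻¹ • ∑ i, g' i x‖ ^ 2
        + 2 / (b * n) * ∑ i, ‖g' i xstar‖ ^ 2 := by
  have hn0 : (0 : ℝ) < n := by exact_mod_cast hn
  have hb0 : (0 : ℝ) < b := by exact_mod_cast hb
  set G := (n : ℝ)⁻¹ • ∑ i, g' i x with hG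
  have hsumG : ∑ i, g' i x = (n : ℝ) • G := by
    rw [hG, smul_smul, mul_inv_cancel₀ hn0.ne', one_smul]
  -- gradient at the minimizer vanishes
  have hzero : ∑ i, g' i xstar = 0 := by
    have h1 : HasFDerivAt (fun u => ∑ i, g i u)
        (∑ i, (InnerProductSpace.toDual ℝ _ (g' i xstar))) xstar :=
      HasFDerivAt.fun_sum fun i _ => (hgrad i xstar).hasFDerivAt
    have h2 : IsLocalMin (fun u => ∑ i, g i u) xstar := by
      refine Filter.Eventually.of_forall fun v => ?_
      have := hstar v
      rw [hf, hf] at this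
      exact le_of_mul_le_mul_left this (inv_pos.2 hn0)
    have h3 := h2.hasFDerivAt_eq_zero h1
    rw [← map_sum] at h3
    exact (InnerProductSpace.toDual ℝ _).map_eq_zero_iff.1 h3
  -- variance identity
  have hvar : ((n : ℝ) ^ b)⁻¹ * ∑ σ : Fin b → Fin n,
      ‖(b : ℝ)⁻¹ • (∑ j, g' (σ j) x) - G‖ ^ 2
      = (b : ℝ)⁻¹ * ((n : ℝ)⁻¹ * ∑ i, ‖g' i x - G‖ ^ 2) := by
    have ha : ∑ i, (g' i x - G) = 0 := by
      rw [Finset.sum_sub_distrib, hsumG]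
      simp [← Nat.cast_smul_eq_nsmul ℝ]
    have h1 := sum_batch n (fun i => g' i x - G) ha b
    have h2 : ∀ σ : Fin b → Fin n, ‖(b : ℝ)⁻¹ • (∑ j, g' (σ j) x) - G‖ ^ 2
        = ((b : ℝ)⁻¹) ^ 2 * ‖∑ j, (g' (σ j) x - G)‖ ^ 2 := by
      intro σ
      have : (b : ℝ)⁻¹ • (∑ j, g' (σ j) x) - G = (b : ℝ)⁻¹ • ∑ j, (g' (σ j) x - G) := by
        rw [Finset.sum_sub_distrib, smul_sub]
        simp [← Nat.cast_smul_eq_nsmul ℝ, smul_smul, inv_mul_cancel₀ hb0.ne']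
      rw [this, norm_smul, mul_pow, Real.norm_of_nonneg (inv_pos.2 hb0).le]
    simp only [h2, ← Finset.mul_sum]
    have h3 : ∑ σ : Fin b → Fin n, ‖∑ j, (g' (σ j) x - G)‖ ^ 2
        = (n : ℝ)⁻¹ * (b * (n : ℝ) ^ b * ∑ i, ‖g' i x - G‖ ^ 2) := by
      rw [← h1, ← mul_assoc, inv_mul_cancel₀ hn0.ne', one_mul]
    rw [h3]
    field_simp
  -- second moment bounds the variance
  have hsm : ∑ i, ‖g' i x - G‖ ^ 2 ≤ ∑ i, ‖g' i x‖ ^ 2 := by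
    have : ∑ i, ‖g' i x - G‖ ^ 2 = ∑ i, ‖g' i x‖ ^ 2 - n * ‖G‖ ^ 2 := by
      simp only [norm_sub_sq_real, Finset.sum_add_distrib, Finset.sum_sub_distrib,
        ← Finset.mul_sum, ← sum_inner, hsumG, inner_smul_left, real_inner_self_eq_norm_sq]
      simp
      ring
    rw [this]
    have : 0 ≤ (n : ℝ) * ‖G‖ ^ 2 := by positivity
    linarith
  have hsplit : ∑ i, ‖g' i x‖ ^ 2
      ≤ 2 * ∑ i, ‖g' i x - g' i xstar‖ ^ 2 + 2 * ∑ i, ‖g' i xstar‖ ^ 2 := by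
    rw [Finset.mul_sum, Finset.mul_sum, ← Finset.sum_add_distrib]
    refine Finset.sum_le_sum fun i _ => ?_
    have h1 : ‖g' i x‖ ≤ ‖g' i x - g' i xstar‖ + ‖g' i xstar‖ := by
      simpa using norm_add_le (g' i x - g' i xstar) (g' i xstar)
    nlinarith [sq_nonneg (‖g' i x - g' i xstar‖ - ‖g' i xstar‖), norm_nonneg (g' i x),
      norm_nonneg (g' i x - g' i xstar), norm_nonneg (g' i xstar)]
  have hco : ∑ i, ‖g' i x - g' i xstar‖ ^ 2 ≤ Lmax * (n * ⟪G, x - xstar⟫_ℝ) := by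
    have : (n : ℝ) * ⟪G, x - xstar⟫_ℝ = ∑ i, ⟪g' i x - g' i xstar, x - xstar⟫_ℝ := by
      rw [← sum_inner, Finset.sum_sub_distrib, hzero, hsumG, sub_zero]
      exact (real_inner_smul_left G _ _).symm
    rw [this, Finset.mul_sum]
    refine Finset.sum_le_sum fun i _ => ?_
    refine (cocoercive (g i) (g' i) (hgrad i) (Li i) (hconv i) (hsmooth i) x xstar).trans ?_
    refine mul_le_mul_of_nonneg_right (hLmax.2 ⟨i, rfl⟩) ?_
    have h1 := hconv i x xstar
    have h2 := hconv i xstar x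
    rw [← neg_sub x xstar, inner_neg_right] at h1
    rw [inner_sub_left]
    linarith
  have hfin : Lmax * ⟪G, x - xstar⟫_ℝ ≤ Lmax / m * ‖G‖ ^ 2 := by
    rcases lt_or_ge Lmax 0 with hL | hL
    · obtain ⟨i, hi⟩ := hLmax.1
      have h1 := (norm_nonneg _).trans (hsmooth i x xstar)
      rw [hi] at h1
      have h2 : ‖x - xstar‖ = 0 := by nlinarith [norm_nonneg (x - xstar)]
      have h3 : x = xstar := by rwa [norm_eq_zero, sub_eq_zero] at h2
      have h4 : G = 0 := by rw [hG, h3, hzero, smul_zero]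
      simp [h4]
    · have h1 := hsc x xstar
      have h2 := hsc xstar x
      rw [hzero] at h2
      rw [← hG, ← neg_sub x xstar, inner_neg_right, norm_neg] at h1
      simp only [smul_zero, inner_zero_left] at h2
      have h3 : m * ‖x - xstar‖ ^ 2 ≤ ⟪G, x - xstar⟫_ℝ := by linarith
      have h4 := real_inner_le_norm G (x - xstar)
      have h5 : ⟪G, x - xstar⟫_ℝ ≤ ‖G‖ ^ 2 / m := by
        rw [le_div_iff₀ hm]
        nlinarith [sq_nonneg (‖G‖ - m * ‖x - xstar‖)]
      calc _ ≤ Lmax * (‖G‖ ^ 2 / m) := mul_le_mul_of_nonneg_left h5 hL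
        _ = _ := by ring
  rw [hvar]
  have hA : ∑ i, ‖g' i x - G‖ ^ 2
      ≤ 2 * (n * (Lmax / m * ‖G‖ ^ 2)) + 2 * ∑ i, ‖g' i xstar‖ ^ 2 := by
    have := mul_le_mul_of_nonneg_left hfin hn0.le
    linarith
  calc _ ≤ (b : ℝ)⁻¹ * ((n : ℝ)⁻¹ *
        (2 * (n * (Lmax / m * ‖G‖ ^ 2)) + 2 * ∑ i, ‖g' i xstar‖ ^ 2)) := by gcongr
    _ = _ := by field_simp
end

section
/- Let a, b > 0, c ≥ 0, d ≥ a, let K be a positive integer and α ∈ (0,1) be such that αK and (1−α)K are positive integers and (1−α)K ≤ d/a, and set k₀ = d/a. Define r_k = 1/d for 1 ≤ k ≤ (1−α)K and r_k = 1/(a(k₀ + k − (1−α)K)) for (1−α)K < k ≤ K. Let (e_k)_{k=0}^{K} and (s_k)_{k=1}^{K} be nonnegative real sequences satisfying e_k ≤ (1 − a·r_k)·e_{k−1} − b·r_k·s_k + c·r_k² for all 1 ≤ k ≤ K. Then (b/(αK))·Σ_{k=(1−α)K+1}^{K} s_k ≤ (d/α)·e_0·exp(−a(1−α)K/d) + (c/(a·α·K))·(1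 + log(1/(1−α))). -/
open Finset

/-- **α-suffix averaging recursion bound.**
With stepsizes `r_k = 1/d` during the first `(1-α)K` iterations and
`r_k = 1/(a(k₀ + k - (1-α)K))` (with `k₀ = d/a`) during the last `αK` iterations,
any nonnegative sequences satisfying `e_k ≤ (1 - a r_k) e_{k-1} - b r_k s_k + c r_k²`
obey `(b/(αK)) Σ_{suffix} s_k ≤ (d/α) e_0 exp(-a(1-α)K/d) + (c/(aαK))(1 + log(1/(1-α)))`. -/
theorem alpha_suffix_averaging_bound
    (a b c d : ℝ) (ha : 0 < a) (hb : 0 < b) (hc : 0 ≤ c) (hd : a ≤ d)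
    (K K1 K2 : ℕ) (α : ℝ) (hα0 : 0 < α) (hα1 : α < 1)
    (hK1 : (K1 : ℝ) = (1 - α) * K) (hK2 : (K2 : ℝ) = α * K)
    (hK1pos : 1 ≤ K1) (hK2pos : 1 ≤ K2) (hKsum : K = K1 + K2)
    (hK1le : (K1 : ℝ) ≤ d / a)
    (r : ℕ → ℝ)
    (hr1 : ∀ k, 1 ≤ k → k ≤ K1 → r k = 1 / d)
    (hr2 : ∀ k, K1 < k → k ≤ K → r k = 1 / (a * (d / a + (k : ℝ) - (K1 : ℝ))))
    (e s : ℕ → ℝ)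
    (he0 : ∀ k, k ≤ K → 0 ≤ e k) (hs0 : ∀ k, 1 ≤ k → k ≤ K → 0 ≤ s k)
    (hrec : ∀ k, 1 ≤ k → k ≤ K →
      e k ≤ (1 - a * r k) * e (k - 1) - b * r k * s k + c * r k ^ 2) :
    b / (α * K) * ∑ k ∈ Icc (K1 + 1) K, s k ≤
      d / α * e 0 * Real.exp (-(a * (1 - α) * K / d))
        + c / (a * α * K) * (1 + Real.log (1 / (1 - α))) := by
  have hd0 : 0 < d := lt_of_lt_of_le ha hd
  have hda : 0 < d / a := div_pos hd0 ha
  have hq0 : 0 ≤ 1 - a / d := by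
    rw [sub_nonneg, div_le_one hd0]; exact hd
  have hp1 : ∀ j, j ≤ K1 → e j ≤ (1 - a / d) ^ j * e 0 + c / (a * d) := by
    intro j
    induction j with
    | zero =>
      intro _
      have : 0 ≤ c / (a * d) := by positivity
      simpa using this
    | succ n ih =>
      intro hn
      have h1 := ih (by omega)
      have h2 := hrec (n + 1) (by omega) (by omega)
      have h3 := hs0 (n + 1) (by omega) (by omega)
      rw [hr1 (n + 1) (by omega) hn, Nat.add_sub_cancel] at h2
      have h4 : 0 ≤ b * (1 / d) * s (n + 1) := by positivity
      have h5 := mul_le_mul_of_nonneg_left h1 hq0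
      have h6 : (1 - a / d) * ((1 - a / d) ^ n * e 0 + c / (a * d)) + c * (1 / d) ^ 2
          = (1 - a / d) ^ (n + 1) * e 0 + c / (a * d) := by
        rw [pow_succ (1 - a / d) n]; generalize (1 - a / d) ^ n = Q; field_simp; ring
      have h7 : a * (1 / d) = a / d := by ring
      rw [h7] at h2
      linarith
  have hp2 : ∀ j : ℕ, j ≤ K2 → b * ∑ k ∈ Icc (K1 + 1) (K1 + j), s k + (d + a * j) * e (K1 + j)
      ≤ d * e K1 + c / a * (Real.log (d / a + j) - Real.log (d / a)) := by
    intro j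
    induction j with
    | zero => intro _; simp
    | succ n ih =>
      intro hn
      have h1 := ih (by omega)
      have h2 := hrec (K1 + (n + 1)) (by omega) (by omega)
      rw [hr2 (K1 + (n + 1)) (by omega) (by omega)] at h2
      have e1 : K1 + (n + 1) - 1 = K1 + n := by omega
      rw [e1] at h2
      have hsum : ∑ k ∈ Icc (K1 + 1) (K1 + (n + 1)), s k
          = ∑ k ∈ Icc (K1 + 1) (K1 + n), s k + s (K1 + (n + 1)) :=
        Finset.sum_Icc_succ_top (a := K1 + 1) (b := K1 + n) (by omega) s
      rw [hsum]
      have hx : 0 < d / a + n := by positivity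
      have hy : 0 < d / a + ((n : ℝ) + 1) := by positivity
      have hlog := Real.one_sub_inv_le_log_of_pos (div_pos hy hx)
      rw [Real.log_div hy.ne' hx.ne', inv_div] at hlog
      have hl2 : 1 - (d / a + n) / (d / a + ((n : ℝ) + 1)) = 1 / (d / a + ((n : ℝ) + 1)) := by
        rw [eq_div_iff hy.ne', sub_mul, div_mul_cancel₀ _ hy.ne']; ring
      rw [hl2] at hlog
      have hl3 := mul_le_mul_of_nonneg_left hlog (div_nonneg hc ha.le)
      push_cast at h2 ⊢
      have e2 : d / a + ((K1 : ℝ) + ((n : ℝ) + 1)) - K1 = d / a + ((n : ℝ) + 1) := by ring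
      rw [e2] at h2
      have e3 : d + a * ((n : ℝ) + 1) = a * (d / a + ((n : ℝ) + 1)) := by field_simp
      have e4 : d + a * (n : ℝ) = a * (d / a + ((n : ℝ) + 1)) - a := by field_simp; ring
      rw [e3]
      rw [e4] at h1
      generalize d / a + ((n : ℝ) + 1) = y at *
      have h5 := mul_le_mul_of_nonneg_left h2 (mul_pos ha hy).le
      have h6 : a * y * ((1 - a * (1 / (a * y))) * e (K1 + n)
          - b * (1 / (a * y)) * s (K1 + (n + 1)) + c * (1 / (a * y)) ^ 2)
          = (a * y - a) * e (K1 + n) - b * s (K1 + (n + 1)) + c / a * (1 / y) := by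
        field_simp
      rw [h6] at h5
      linarith
  have hA := hp1 K1 le_rfl
  have hB := hp2 K2 le_rfl
  rw [← hKsum] at hB
  have hKpos : (1 : ℝ) ≤ K := by
    have : 1 ≤ K := by omega
    exact_mod_cast this
  have hK1' : (0 : ℝ) < K1 := by exact_mod_cast hK1pos
  have heK : 0 ≤ (d + a * K2) * e K := mul_nonneg (by positivity) (he0 K le_rfl)
  have he00 := he0 0 (by omega)
  have hexp : (1 - a / d) ^ K1 ≤ Real.exp (-(a * (1 - α) * K / d)) := by
    have h1 : 1 - a / d ≤ Real.exp (-(a / d)) := Real.one_sub_le_exp_neg _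
    have h2 := pow_le_pow_left₀ hq0 h1 K1
    rw [← Real.exp_nat_mul] at h2
    have h3 : (K1 : ℝ) * -(a / d) = -(a * (1 - α) * K / d) := by rw [hK1]; ring
    rwa [h3] at h2
  have hlog : Real.log (d / a + K2) - Real.log (d / a) ≤ Real.log (1 / (1 - α)) := by
    rw [← Real.log_div (by positivity) hda.ne']
    apply Real.log_le_log (by positivity)
    have h1α : 0 < 1 - α := by linarith
    rw [div_le_div_iff₀ hda h1α]
    have h8 : (K2 : ℝ) * (1 - α) = α * K1 := by rw [hK1, hK2]; ring
    nlinarith [mul_le_mul_of_nonneg_left hK1le hα0.le]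
  have hl := mul_le_mul_of_nonneg_left hlog (div_nonneg hc ha.le)
  have hE := mul_le_mul_of_nonneg_right hexp he00
  have hA2 := mul_le_mul_of_nonneg_left (hA.trans (add_le_add_left hE _)) hd0.le
  set E := Real.exp (-(a * (1 - α) * K / d)) with hEdef
  have hEpos : 0 < E := Real.exp_pos _
  set L := Real.log (1 / (1 - α))
  have hcd : d * (E * e 0 + c / (a * d)) = d * E * e 0 + c / a := by field_simp
  have hfin : b * ∑ k ∈ Icc (K1 + 1) K, s k ≤ d * E * e 0 * K + c / a * (1 + L) := by
    have : d * E * e 0 ≤ d * E * e 0 * K := le_mul_of_one_le_right (by positivity) hKpos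
    linarith
  have hK0 : (0 : ℝ) < K := by linarith
  have hm := mul_le_mul_of_nonneg_left hfin (inv_nonneg.mpr (mul_pos hα0 hK0).le)
  calc b / (α * K) * ∑ k ∈ Icc (K1 + 1) K, s k
      = (α * K)⁻¹ * (b * ∑ k ∈ Icc (K1 + 1) K, s k) := by ring
    _ ≤ _ := hm
    _ = _ := by field_simp
end

section
/- Let f ∈ F(m,L) with minimizer x⋆, let 0 < θ ≤ 1 with θm < L, and let 0 ≤ ρ ≤ 1. For y ∈ ℝ^d write ỹ = y − x⋆, g = ∇f(y), g_θ(y) = f(y) − f(x⋆) − (θm/2)‖ỹ‖², and q_θ(y) = (L − θm)·g_θ(y) − (1/2)‖g − θmỹ‖². Then for all y, y' ∈ ℝ^d (writing g' = ∇f(y') and ỹ' = y' − x⋆): (1) q_θ(y) ≥ 0; (2) ⟨g − θmỹ, Lỹ − g⟩ ≥ q_θ(y); (3) ⟨g − θmỹ, L(ỹ − ρ²ỹ') − (g − ρ²g')⟩ ≥ q_θ(y) − ρ²·q_θ(y'). -/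
open scoped InnerProductSpace

lemma rmm_key {E : Type*} [NormedAddCommGroup E] [InnerProductSpace ℝ E]
    (f : E → ℝ) (f' : E → E) (a L : ℝ) (haL : a < L)
    (hsc : ∀ u v, f u + ⟪f' u, v - u⟫_ℝ + a / 2 * ‖v - u‖ ^ 2 ≤ f v)
    (hsm : ∀ u v, f v ≤ f u + ⟪f' u, v - u⟫_ℝ + L / 2 * ‖v - u‖ ^ 2) (u v : E) :
    1 / 2 * ‖f' u - f' v - a • (u - v)‖ ^ 2
      ≤ (L - a) * (f u - f v - ⟪f' v, u - v⟫_ℝ - a / 2 * ‖u - v‖ ^ 2) := by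
  have hK : 0 < L - a := sub_pos.2 haL
  obtain ⟨t, ht⟩ : ∃ t : ℝ, t = 1 / (L - a) := ⟨_, rfl⟩
  have htK : (L - a) * t = 1 := by rw [ht]; field_simp
  obtain ⟨D, hD⟩ : ∃ D : E, D = f' u - f' v - a • (u - v) := ⟨_, rfl⟩
  have h1 := hsc v (u - t • D)
  have h2 := hsm u (u - t • D)
  have e1 : u - t • D - v = (u - v) - t • D := by abel
  have e2 : u - t • D - u = -(t • D) := by abel
  rw [e1, norm_sub_sq_real, inner_sub_right, inner_smul_right, inner_smul_right, norm_smul,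
    mul_pow, Real.norm_eq_abs, sq_abs] at h1
  rw [e2, norm_neg, inner_neg_right, inner_smul_right, norm_smul,
    mul_pow, Real.norm_eq_abs, sq_abs] at h2
  have h3 : ⟪f' u, D⟫_ℝ - ⟪f' v, D⟫_ℝ - a * ⟪u - v, D⟫_ℝ = ‖D‖ ^ 2 := by
    rw [← real_inner_self_eq_norm_sq]
    nth_rewrite 4 [hD]
    simp only [inner_sub_left, inner_smul_left]
    simp
  rw [← hD]
  have h4 : t * ‖D‖ ^ 2 - (L - a) * t * t / 2 * ‖D‖ ^ 2
      ≤ f u - f v - ⟪f' v, u - v⟫_ℝ - a / 2 * ‖u - v‖ ^ 2 := by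
    have h3t := congrArg (fun x => t * x) h3
    linarith
  have h5 := mul_le_mul_of_nonneg_left h4 hK.le
  rw [htK] at h5
  have h6 : (L - a) * (t * ‖D‖ ^ 2 - 1 * t / 2 * ‖D‖ ^ 2)
      = ((L - a) * t) * (1 / 2 * ‖D‖ ^ 2) := by ring
  rw [h6, htK, one_mul] at h5
  exact h5

/-- **Integral quadratic constraints for the robust momentum method.**
For `f ∈ F(m, L)` with minimizer `x⋆`, `0 < θ ≤ 1` with `θm < L`, and `0 ≤ ρ ≤ 1`,
writing `q_θ(y) = (L - θm)(f(y) - f(x⋆) - (θm/2)‖y - x⋆‖²) - (1/2)‖∇f(y) - θm(y - x⋆)‖²`,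
we have: (1) `q_θ(y) ≥ 0`; (2) `⟨∇f(y) - θm ỹ, L ỹ - ∇f(y)⟩ ≥ q_θ(y)`;
(3) `⟨∇f(y) - θm ỹ, L(ỹ - ρ² ỹ') - (∇f(y) - ρ² ∇f(y'))⟩ ≥ q_θ(y) - ρ² q_θ(y')`. -/
theorem rmm_iqc
    {d : ℕ} (f : EuclideanSpace ℝ (Fin d) → ℝ)
    (f' : EuclideanSpace ℝ (Fin d) → EuclideanSpace ℝ (Fin d))
    (m L : ℝ) (hm : 0 < m) (hmL : m ≤ L)
    (hgrad : ∀ u, HasGradientAt f (f' u) u)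
    (hsc : ∀ u v, f u + ⟪f' u, v - u⟫_ℝ + m / 2 * ‖v - u‖ ^ 2 ≤ f v)
    (hsm : ∀ u v, f v ≤ f u + ⟪f' u, v - u⟫_ℝ + L / 2 * ‖v - u‖ ^ 2)
    (xstar : EuclideanSpace ℝ (Fin d)) (hstar : ∀ v, f xstar ≤ f v)
    (θ : ℝ) (hθ0 : 0 < θ) (hθ1 : θ ≤ 1) (hθmL : θ * m < L)
    (ρ : ℝ) (hρ0 : 0 ≤ ρ) (hρ1 : ρ ≤ 1) :
    ∀ y y' : EuclideanSpace ℝ (Fin d),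
      (0 ≤ (L - θ * m) * (f y - f xstar - θ * m / 2 * ‖y - xstar‖ ^ 2)
          - 1 / 2 * ‖f' y - (θ * m) • (y - xstar)‖ ^ 2) ∧
      ((L - θ * m) * (f y - f xstar - θ * m / 2 * ‖y - xstar‖ ^ 2)
          - 1 / 2 * ‖f' y - (θ * m) • (y - xstar)‖ ^ 2
        ≤ ⟪f' y - (θ * m) • (y - xstar), L • (y - xstar) - f' y⟫_ℝ) ∧
      (((L - θ * m) * (f y - f xstar - θ * m / 2 * ‖y - xstar‖ ^ 2)
          - 1 / 2 * ‖f' y - (θ * m) • (y - xstar)‖ ^ 2)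
        - ρ ^ 2 * ((L - θ * m) * (f y' - f xstar - θ * m / 2 * ‖y' - xstar‖ ^ 2)
          - 1 / 2 * ‖f' y' - (θ * m) • (y' - xstar)‖ ^ 2)
        ≤ ⟪f' y - (θ * m) • (y - xstar),
            L • ((y - xstar) - ρ ^ 2 • (y' - xstar)) - (f' y - ρ ^ 2 • f' y')⟫_ℝ) := by
  intro y y'
  have h0 : f' xstar = 0 := by
    have hl : IsLocalMin f xstar := Filter.Eventually.of_forall hstar
    have := hl.hasFDerivAt_eq_zero (hgrad xstar).hasFDerivAt
    simpa using this
  obtain ⟨a, ha⟩ : ∃ a : ℝ, a = θ * m := ⟨_, rfl⟩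
  have ham : a ≤ m := by rw [ha]; nlinarith
  rw [← ha] at hθmL ⊢
  have hsc' : ∀ u v, f u + ⟪f' u, v - u⟫_ℝ + a / 2 * ‖v - u‖ ^ 2 ≤ f v := fun u v => by
    have := hsc u v
    nlinarith [sq_nonneg ‖v - u‖]
  have key := rmm_key f f' a L hθmL hsc' hsm
  have k1 := key y xstar
  have k2 := key xstar y
  have k3 := key y' y
  rw [h0] at k1 k2
  have e2 : xstar - y = -(y - xstar) := by abel
  have e3 : y' - y = (y' - xstar) - (y - xstar) := by abel
  rw [e2] at k2
  rw [e3] at k3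
  generalize y - xstar = Y at *
  generalize y' - xstar = Y' at *
  generalize f' y = G at *
  generalize f' y' = G' at *
  have c1 := real_inner_comm Y G
  have c2 := real_inner_comm Y' G
  have c3 := real_inner_comm Y G'
  have c4 := real_inner_comm Y' G'
  have c5 := real_inner_comm Y Y'
  have c6 := real_inner_comm G G'
  simp only [← real_inner_self_eq_norm_sq, inner_sub_left, inner_sub_right, inner_neg_left,
    inner_neg_right, real_inner_smul_left, real_inner_smul_right, inner_zero_left,
    inner_zero_right, smul_sub, smul_neg] at k1 k2 k3 ⊢
  simp only [c1, c2, c3, c4, c5, c6] at k1 k2 k3 ⊢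
  refine ⟨by linarith, by linarith, ?_⟩
  have r1 : 0 ≤ 1 - ρ ^ 2 := by nlinarith
  nlinarith [mul_le_mul_of_nonneg_left k2 r1, mul_le_mul_of_nonneg_left k3 (sq_nonneg ρ)]
end

section
/- Let c₁, c₂ ≥ 0, 0 < r < 1, and let k ≥ 1 be an integer. Let (D_t)_{t=1}^{k}, (S_t)_{t=1}^{k}, (s_t)_{t=1}^{k} be nonnegative real sequences with s_t > 0, and (V_t)_{t=0}^{k−1} a nonnegative real sequence, such that: D_t ≤ c₁·S_t + V_{t−1} for 1 ≤ t ≤ k; V_0 ≤ c₂·S_1; V_t ≤ c₂·S_{t+1} + (1−r)·V_{t−1} for 1 ≤ t ≤ k−1; and s_t·(1−r) ≤ s_{t−1}·(1 − r/2) for 2 ≤ t ≤ k. Then Σ_{t=1}^{k} s_t·D_t ≤ (c₁ + 2c₂/r)·Σ_{t=1}^{k} s_t·S_t. -/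
open Finset

/-- **Variance bound under the general growth condition.**
If `D_t ≤ c₁ S_t + V_{t-1}`, `V_0 ≤ c₂ S_1`, `V_t ≤ c₂ S_{t+1} + (1-r) V_{t-1}`,
and the positive weights satisfy `s_t (1-r) ≤ s_{t-1} (1 - r/2)`, then
`Σ_{t=1}^k s_t D_t ≤ (c₁ + 2c₂/r) Σ_{t=1}^k s_t S_t`. -/
theorem ggc_weighted_variance_bound
    (c₁ c₂ r : ℝ) (hc₁ : 0 ≤ c₁) (hc₂ : 0 ≤ c₂) (hr0 : 0 < r) (hr1 : r < 1)
    (k : ℕ) (hk : 1 ≤ k)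
    (D S s V : ℕ → ℝ)
    (hD0 : ∀ t, 1 ≤ t → t ≤ k → 0 ≤ D t)
    (hS0 : ∀ t, 1 ≤ t → t ≤ k → 0 ≤ S t)
    (hs0 : ∀ t, 1 ≤ t → t ≤ k → 0 < s t)
    (hV0' : ∀ t, t ≤ k - 1 → 0 ≤ V t)
    (hDS : ∀ t, 1 ≤ t → t ≤ k → D t ≤ c₁ * S t + V (t - 1))
    (hV0 : V 0 ≤ c₂ * S 1)
    (hVrec : ∀ t, 1 ≤ t → t ≤ k - 1 → V t ≤ c₂ * S (t + 1) + (1 - r) * V (t - 1))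
    (hsdec : ∀ t, 2 ≤ t → t ≤ k → s t * (1 - r) ≤ s (t - 1) * (1 - r / 2)) :
    ∑ t ∈ Icc 1 k, s t * D t ≤ (c₁ + 2 * c₂ / r) * ∑ t ∈ Icc 1 k, s t * S t := by
  have ha : 0 < 2 / r := by positivity
  have hc : c₁ + 2 * c₂ / r = c₁ + (2 / r) * c₂ := by ring
  rw [hc]
  have har : (2 / r) * (1 - r / 2) = 2 / r - 1 := by field_simp
  generalize 2 / r = a at *
  have key : ∀ m, 1 ≤ m → m ≤ k →
      ∑ t ∈ Icc 1 m, s t * D t + a * (1 - r / 2) * (s m * V (m - 1))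
        ≤ (c₁ + a * c₂) * ∑ t ∈ Icc 1 m, s t * S t := by
    intro m hm
    induction m, hm using Nat.le_induction with
    | base =>
      intro h
      simp only [Icc_self, sum_singleton, Nat.sub_self]
      rw [har]
      have h1 := mul_le_mul_of_nonneg_left (hDS 1 le_rfl h) (hs0 1 le_rfl h).le
      have h2 := mul_le_mul_of_nonneg_left hV0 (mul_pos ha (hs0 1 le_rfl h)).le
      simp only [Nat.sub_self] at h1
      linarith
    | succ m hm ih =>
      intro h
      have ih := ih (by omega)
      rw [sum_Icc_succ_top (by omega), sum_Icc_succ_top (by omega)]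
      have hs := hs0 (m + 1) (by omega) h
      have h1 := mul_le_mul_of_nonneg_left (hDS (m + 1) (by omega) h) hs.le
      have h2 := mul_le_mul_of_nonneg_left (hVrec m hm (by omega)) (mul_pos ha hs).le
      have h3 := mul_le_mul_of_nonneg_right (hsdec (m + 1) (by omega) h)
        (mul_nonneg ha.le (hV0' (m - 1) (by omega)))
      simp only [Nat.add_sub_cancel] at h1 h3 ⊢
      have h4 : a * (1 - r / 2) * (s (m + 1) * V m) = (a - 1) * (s (m + 1) * V m) := by
        rw [har]
      rw [h4]
      linarith
  have hfin := key k hk le_rfl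
  have hpos : 0 ≤ a * (1 - r / 2) * (s k * V (k - 1)) :=
    mul_nonneg (mul_nonneg ha.le (by linarith))
      (mul_nonneg (hs0 k hk le_rfl).le (hV0' _ le_rfl))
  linarith
end

section
/- Let ρ ∈ (0,1), R ≥ 0, N ≥ 0, c₁, c₂ ≥ 0, 0 < r < 1, m > 0, and L_max > 0 satisfy L_max·N·(c₁ + 2c₂/r) ≤ m·R and 1 − r ≤ ρ·(1 − r/2). Let (v_k)_{k≥1}, (F_k)_{k≥1}, (D_k)_{k≥1}, (S_k)_{k≥1} be nonnegative real sequences and (V_k)_{k≥0} a nonnegative real sequence such that for all k ≥ 1: v_{k+1} ≤ ρ·v_k − 2mR·F_k + N·D_k; D_k ≤ c₁·S_k + V_{k−1}; V_0 ≤ c₂·S_1 and V_k ≤ c₂·S_{k+1} + (1−r)·V_{k−1}; and S_k ≤ 2·L_max·F_k. Then v_{k+1} ≤ ρ^k·v_1 for all k ≥ 1. -/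
/-- **Variance-reduced methods preserve linear convergence.**
If a robustly convergent method with contraction `ρ`, margin `R`, and noise
sensitivity `N` is driven by a gradient estimator satisfying the general growth
condition with constants `(c₁, c₂, r)`, and `L_max N (c₁ + 2c₂/r) ≤ m R` together
with `1 - r ≤ ρ (1 - r/2)`, then the expected Lyapunov function converges linearly:
`v_{k+1} ≤ ρ^k v_1`. -/
theorem variance_reduced_linear_convergence
    (ρ R N c₁ c₂ r m Lmax : ℝ)
    (hρ0 : 0 < ρ) (hρ1 : ρ < 1) (hR : 0 ≤ R) (hN : 0 ≤ N)
    (hc₁ : 0 ≤ c₁) (hc₂ : 0 ≤ c₂) (hr0 : 0 < r) (hr1 : r < 1)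
    (hm : 0 < m) (hLmax : 0 < Lmax)
    (hmain : Lmax * N * (c₁ + 2 * c₂ / r) ≤ m * R)
    (hrate : 1 - r ≤ ρ * (1 - r / 2))
    (v F D S V : ℕ → ℝ)
    (hv0 : ∀ k, 1 ≤ k → 0 ≤ v k) (hF0 : ∀ k, 1 ≤ k → 0 ≤ F k)
    (hD0 : ∀ k, 1 ≤ k → 0 ≤ D k) (hS0 : ∀ k, 1 ≤ k → 0 ≤ S k)
    (hV0' : ∀ k, 0 ≤ V k)
    (hvrec : ∀ k, 1 ≤ k → v (k + 1) ≤ ρ * v k - 2 * m * R * F k + N * D k)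
    (hDrec : ∀ k, 1 ≤ k → D k ≤ c₁ * S k + V (k - 1))
    (hV0 : V 0 ≤ c₂ * S 1)
    (hVrec : ∀ k, 1 ≤ k → V k ≤ c₂ * S (k + 1) + (1 - r) * V (k - 1))
    (hSF : ∀ k, 1 ≤ k → S k ≤ 2 * Lmax * F k) :
    ∀ k, 1 ≤ k → v (k + 1) ≤ ρ ^ k * v 1 := by
  obtain ⟨b, hb, rfl⟩ : ∃ b : ℝ, 0 ≤ b ∧ N = b * r :=
    ⟨N / r, div_nonneg hN hr0.le, by field_simp⟩
  have hcoef : b * r * (c₁ + 2 * c₂ / r) = b * r * c₁ + 2 * b * c₂ := by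
    field_simp
  have hstep : ∀ k, 1 ≤ k →
      v (k + 1) ≤ ρ * v k - 2 * b * c₂ * S k + b * r * V (k - 1) := by
    intro k hk
    have h1 := hvrec k hk
    have h2 := mul_le_mul_of_nonneg_left (hDrec k hk) hN
    have h3 := mul_le_mul_of_nonneg_right hmain (hF0 k hk)
    have hq : 0 ≤ b * r * c₁ + 2 * b * c₂ := by positivity
    have h4 := mul_le_mul_of_nonneg_left (hSF k hk) hq
    have h5 : Lmax * (b * r) * (c₁ + 2 * c₂ / r) = Lmax * (b * r * c₁ + 2 * b * c₂) := by
      rw [← hcoef]; ring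
    rw [h5] at h3
    linarith
  have key : ∀ k, 1 ≤ k → v (k + 1) + b * (2 - r) * V (k - 1) ≤ ρ ^ k * v 1 := by
    intro k hk
    induction k, hk using Nat.le_induction with
    | base =>
      have h1 := hstep 1 le_rfl
      have h2 := mul_le_mul_of_nonneg_left hV0 hb
      simp only [Nat.sub_self, pow_one] at *
      linarith
    | succ k hk ih =>
      have h1 := hstep (k + 1) (by omega)
      have h2 := mul_le_mul_of_nonneg_left (hVrec k hk) hb
      have h3 := mul_le_mul_of_nonneg_left ih hρ0.le
      have h4 := mul_le_mul_of_nonneg_right hrate (mul_nonneg hb (hV0' (k - 1)))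
      simp only [Nat.add_sub_cancel] at *
      rw [pow_succ]
      linarith
  intro k hk
  have h1 := key k hk
  have h2 : 0 ≤ b * (2 - r) * V (k - 1) :=
    mul_nonneg (mul_nonneg hb (by linarith)) (hV0' _)
  linarith
end

section
/- Let f_1, …, f_n : ℝ^d → ℝ be differentiable, let f = (1/n)·Σ_{i=1}^n f_i, fix points y, x⋆, φ¹, …, φⁿ ∈ ℝ^d and a batch size b ≥ 1, let j_1, …, j_b be i.i.d. uniform random indices in {1, …, n}, and define the SAGA estimator ∇̂f(y) = (1/b)·Σ_{l=1}^{b} (∇f_{j_l}(y) − ∇f_{j_l}(φ^{j_l})) + (1/n)·Σ_{i=1}^{n} ∇f_i(φ^i). Then E[∇̂f(y)] = ∇f(y), and E‖∇̂f(y) − ∇f(y)‖² ≤ (2/(b·n))·Σ_{i=1}^{n} ‖∇f_i(y) − ∇f_i(x⋆)‖² + (2/(b·n))·Σ_{i=1}^{n} ‖∇f_i(φ^i) − ∇f_i(x⋆)‖². -/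
open Finset

theorem saga_sum_cons {M : Type*} [AddCommMonoid M] (n b : ℕ) (F : (Fin (b + 1) → Fin n) → M) :
    ∑ σ, F σ = ∑ i : Fin n, ∑ τ : Fin b → Fin n, F (Fin.cons i τ) := by
  rw [← (Fin.consEquiv (fun _ : Fin (b + 1) => Fin n)).sum_comp, Fintype.sum_prod_type]
  rfl

theorem saga_sum_zero {E : Type*} [NormedAddCommGroup E] [InnerProductSpace ℝ E]
    (n : ℕ) (Z : Fin n → E) (hZ : ∑ i, Z i = 0) (b : ℕ) :
    ∑ σ : Fin b → Fin n, ∑ l, Z (σ l) = 0 := by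
  induction b with
  | zero => simp
  | succ b ih =>
    rw [saga_sum_cons]
    simp only [Fin.sum_univ_succ, Fin.cons_zero, Fin.cons_succ, Finset.sum_add_distrib, ih]
    rw [Finset.sum_comm]
    simp [hZ]

theorem saga_sum_sq {E : Type*} [NormedAddCommGroup E] [InnerProductSpace ℝ E]
    (n : ℕ) (Z : Fin n → E) (hZ : ∑ i, Z i = 0) (b : ℕ) :
    (n : ℝ) * ∑ σ : Fin b → Fin n, ‖∑ l, Z (σ l)‖ ^ 2 = b * (n : ℝ) ^ b * ∑ i, ‖Z i‖ ^ 2 := by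
  induction b with
  | zero => simp
  | succ b ih =>
    rw [saga_sum_cons]
    simp only [Fin.sum_univ_succ, Fin.cons_zero, Fin.cons_succ, norm_add_sq_real,
      Finset.sum_add_distrib, ← Finset.mul_sum, ← inner_sum, saga_sum_zero n Z hZ b]
    simp only [inner_zero_right, Finset.sum_const, Finset.card_univ, Fintype.card_fin,
      Fintype.card_pi, Finset.prod_const, nsmul_eq_mul, ← Finset.mul_sum, mul_zero, add_zero]
    rw [mul_add, ih]
    push_cast
    ring

theorem saga_var_le {E : Type*} [NormedAddCommGroup E] [InnerProductSpace ℝ E]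
    (n : ℕ) (X : Fin n → E) (m : E) (hm : ∑ i, X i = (n : ℝ) • m) :
    ∑ i, ‖X i - m‖ ^ 2 ≤ ∑ i, ‖X i‖ ^ 2 := by
  simp only [norm_sub_sq_real, Finset.sum_add_distrib, Finset.sum_sub_distrib,
    ← Finset.mul_sum, ← sum_inner, hm, inner_smul_left, real_inner_self_eq_norm_sq]
  simp
  nlinarith [mul_nonneg (Nat.cast_nonneg (α := ℝ) n) (sq_nonneg ‖m‖)]

/-- **General growth condition for the SAGA gradient estimator.**
With `b` i.i.d. uniform indices (so that expectation is the uniform average over all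
`n^b` index tuples), the SAGA estimator
`∇̂f(y) = (1/b) Σ_l (∇f_{j_l}(y) - ∇f_{j_l}(φ^{j_l})) + (1/n) Σ_i ∇f_i(φ^i)`
is unbiased and satisfies
`E‖∇̂f(y) - ∇f(y)‖² ≤ (2/(bn)) Σ_i ‖∇f_i(y) - ∇f_i(x⋆)‖²
  + (2/(bn)) Σ_i ‖∇f_i(φ^i) - ∇f_i(x⋆)‖²`. -/
theorem saga_growth_condition
    {d : ℕ} (n : ℕ) (hn : 0 < n)
    (g : Fin n → EuclideanSpace ℝ (Fin d) → ℝ)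
    (g' : Fin n → EuclideanSpace ℝ (Fin d) → EuclideanSpace ℝ (Fin d))
    (hgrad : ∀ i u, HasGradientAt (g i) (g' i u) u)
    (f : EuclideanSpace ℝ (Fin d) → ℝ)
    (hf : ∀ u, f u = (n : ℝ)⁻¹ * ∑ i, g i u)
    (y xstar : EuclideanSpace ℝ (Fin d)) (φ : Fin n → EuclideanSpace ℝ (Fin d))
    (b : ℕ) (hb : 1 ≤ b) :
    ((n : ℝ) ^ b)⁻¹ • (∑ σ : Fin b → Fin n,
        ((b : ℝ)⁻¹ • (∑ l, (g' (σ l) y - g' (σ l) (φ (σ l))))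
          + (n : ℝ)⁻¹ • ∑ i, g' i (φ i)))
      = (n : ℝ)⁻¹ • ∑ i, g' i y ∧
    ((n : ℝ) ^ b)⁻¹ *
        ∑ σ : Fin b → Fin n,
          ‖((b : ℝ)⁻¹ • (∑ l, (g' (σ l) y - g' (σ l) (φ (σ l))))
              + (n : ℝ)⁻¹ • ∑ i, g' i (φ i)) - (n : ℝ)⁻¹ • ∑ i, g' i y‖ ^ 2 ≤
      2 / (b * n) * ∑ i, ‖g' i y - g' i xstar‖ ^ 2
        + 2 / (b * n) * ∑ i, ‖g' i (φ i) - g' i xstar‖ ^ 2 := by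
  have hn0 : (n : ℝ) ≠ 0 := by positivity
  have hb0 : (b : ℝ) ≠ 0 := by positivity
  obtain ⟨X, hX⟩ : ∃ X : Fin n → EuclideanSpace ℝ (Fin d),
      X = fun i => g' i y - g' i (φ i) := ⟨_, rfl⟩
  obtain ⟨m, hm⟩ : ∃ m, m = (n : ℝ)⁻¹ • ∑ i, X i := ⟨_, rfl⟩
  have hXm : ∑ i, X i = (n : ℝ) • m := by rw [hm, smul_inv_smul₀ hn0]
  have hZ : ∑ i, (X i - m) = 0 := by
    rw [Finset.sum_sub_distrib, hXm]; simp [Nat.cast_smul_eq_nsmul]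
  have hm2 : m = (n : ℝ)⁻¹ • ∑ i, g' i y - (n : ℝ)⁻¹ • ∑ i, g' i (φ i) := by
    rw [hm, hX, Finset.sum_sub_distrib, smul_sub]
  have key : ∀ σ : Fin b → Fin n,
      (b : ℝ)⁻¹ • (∑ l, (g' (σ l) y - g' (σ l) (φ (σ l)))) + (n : ℝ)⁻¹ • ∑ i, g' i (φ i)
        = (b : ℝ)⁻¹ • (∑ l, (X (σ l) - m)) + (n : ℝ)⁻¹ • ∑ i, g' i y := by
    intro σ
    have h1 : ∑ l, (X (σ l) - m) =
        ∑ l, (g' (σ l) y - g' (σ l) (φ (σ l))) - (b : ℝ) • m := by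
      rw [Finset.sum_sub_distrib, hX]; simp [Nat.cast_smul_eq_nsmul]
    rw [h1, smul_sub, inv_smul_smul₀ hb0, hm2]
    abel
  simp only [key, add_sub_cancel_right]
  constructor
  · rw [Finset.sum_add_distrib, ← Finset.smul_sum,
      saga_sum_zero n (fun i => X i - m) hZ b, smul_zero, zero_add, Finset.sum_const,
      Finset.card_univ, Fintype.card_fun, Fintype.card_fin, Fintype.card_fin,
      ← Nat.cast_smul_eq_nsmul ℝ, Nat.cast_pow, inv_smul_smul₀ (pow_ne_zero _ hn0)]
  · have hsq := saga_sum_sq n (fun i => X i - m) hZ b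
    have hv := saga_var_le n X m hXm
    have h2 : ∑ i, ‖X i‖ ^ 2 ≤
        2 * ∑ i, ‖g' i y - g' i xstar‖ ^ 2 + 2 * ∑ i, ‖g' i (φ i) - g' i xstar‖ ^ 2 := by
      rw [Finset.mul_sum, Finset.mul_sum, ← Finset.sum_add_distrib]
      refine Finset.sum_le_sum fun i _ => ?_
      have e : X i = (g' i y - g' i xstar) - (g' i (φ i) - g' i xstar) := by
        rw [hX]; simp
      rw [e]
      have := parallelogram_law_with_norm ℝ (g' i y - g' i xstar) (g' i (φ i) - g' i xstar)
      nlinarith [sq_nonneg ‖(g' i y - g' i xstar) + (g' i (φ i) - g' i xstar)‖]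
    simp only [norm_smul, mul_pow, ← Finset.mul_sum]
    have hS : ∑ σ : Fin b → Fin n, ‖∑ l, (X (σ l) - m)‖ ^ 2
        = (n : ℝ)⁻¹ * (b * (n : ℝ) ^ b * ∑ i, ‖X i - m‖ ^ 2) := by
      rw [← hsq, inv_mul_cancel_left₀ hn0]
    rw [hS]
    have hL : ((n : ℝ) ^ b)⁻¹ * (‖(b : ℝ)⁻¹‖ ^ 2 *
        ((n : ℝ)⁻¹ * (b * (n : ℝ) ^ b * ∑ i, ‖X i - m‖ ^ 2)))
        = (1 / (b * n)) * ∑ i, ‖X i - m‖ ^ 2 := by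
      rw [norm_inv, Real.norm_natCast]
      field_simp
    rw [hL]
    calc _ ≤ (1 / ((b : ℝ) * n)) * (2 * ∑ i, ‖g' i y - g' i xstar‖ ^ 2
          + 2 * ∑ i, ‖g' i (φ i) - g' i xstar‖ ^ 2) :=
          mul_le_mul_of_nonneg_left (hv.trans h2) (by positivity)
      _ = _ := by ring
end

section
/- Let f_1, …, f_n : ℝ^d → ℝ be differentiable, let f = (1/n)·Σ_{i=1}^n f_i, let p ≥ 1, fix points y, ȳ, x⋆ ∈ ℝ^d and a batch size b ≥ 1, let j_1, …, j_b be i.i.d. uniform random indices in {1, …, n}, and let I ∈ {0,1} be an independent Bernoulli random variable with P(I = 1) = 1/p. Define the SVRG estimator ∇̂f(y) = ∇f(y) if I = 1, and ∇̂f(y) = (1/b)·Σ_{l=1}^{b} (∇f_{j_l}(y) − ∇f_{j_l}(ȳ)) + ∇f(ȳ) if I = 0. Then E[∇̂f(y)] = ∇f(y), and E‖∇̂f(y) − ∇f(y)‖² ≤ (2(1 − 1/p)/(b·n))·[Σ_{i=1}^{n} ‖∇f_i(y) − ∇f_i(x⋆)‖² + Σ_{i=1}^{n} ‖∇f_i(ȳ)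 − ∇f_i(x⋆)‖²]. -/
open Finset

section Helpers
variable {E : Type*} [NormedAddCommGroup E] [InnerProductSpace ℝ E]

lemma svrg_sum_cons {M : Type*} [AddCommMonoid M] {n b : ℕ} (F : (Fin (b + 1) → Fin n) → M) :
    ∑ σ, F σ = ∑ i : Fin n, ∑ τ : Fin b → Fin n, F (Fin.cons i τ) := by
  rw [← (Fin.consEquiv (fun _ : Fin (b + 1) => Fin n)).sum_comp, Fintype.sum_prod_type]
  rfl

lemma svrg_first {n : ℕ} (z : Fin n → E) (hz : ∑ i, z i = 0) (b : ℕ) :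
    ∑ σ : Fin b → Fin n, ∑ l, z (σ l) = 0 := by
  induction b with
  | zero => simp
  | succ b ih =>
    rw [svrg_sum_cons]
    simp only [Fin.sum_univ_succ, Fin.cons_zero, Fin.cons_succ, Finset.sum_add_distrib, ih]
    simp [← Finset.smul_sum, hz]

lemma svrg_second {n : ℕ} (z : Fin n → E) (hz : ∑ i, z i = 0) (b : ℕ) :
    (n : ℝ) * ∑ σ : Fin b → Fin n, ‖∑ l, z (σ l)‖ ^ 2 = b * (n : ℝ) ^ b * ∑ i, ‖z i‖ ^ 2 := by
  induction b with
  | zero => simp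
  | succ b ih =>
    rw [svrg_sum_cons]
    simp only [Fin.sum_univ_succ, Fin.cons_zero, Fin.cons_succ, norm_add_sq_real,
      Finset.sum_add_distrib, ← Finset.mul_sum, ← inner_sum, svrg_first z hz b]
    simp only [Finset.sum_const, Finset.card_univ, Fintype.card_fin, Fintype.card_pi,
      Finset.prod_const, nsmul_eq_mul, inner_zero_right, mul_zero, ← Finset.mul_sum]
    push_cast
    linear_combination (n : ℝ) * ih

lemma svrg_var {n : ℕ} (z : Fin n → E) (hz : ∑ i, z i = 0) (m : E) :
    ∑ i, ‖z i‖ ^ 2 ≤ ∑ i, ‖z i + m‖ ^ 2 := by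
  simp only [norm_add_sq_real, Finset.sum_add_distrib, ← Finset.mul_sum, ← sum_inner, hz,
    inner_zero_left]
  have : 0 ≤ ∑ _i : Fin n, ‖m‖ ^ 2 := by positivity
  linarith

lemma svrg_two (u v w : E) : ‖u - v‖ ^ 2 ≤ 2 * (‖u - w‖ ^ 2 + ‖v - w‖ ^ 2) := by
  have h := parallelogram_law_with_norm ℝ (u - w) (v - w)
  rw [sub_sub_sub_cancel_right] at h
  nlinarith [mul_self_nonneg ‖u - w + (v - w)‖]

end Helpers

/-- **General growth condition for the SVRG gradient estimator.**
With `b` i.i.d. uniform indices and an independent Bernoulli refresh variable `I`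
with success probability `1/p` (so that expectation is the corresponding mixture of
the uniform average over all `n^b` index tuples), the SVRG estimator
`∇̂f(y) = ∇f(y)` if `I = 1` and
`∇̂f(y) = (1/b) Σ_l (∇f_{j_l}(y) - ∇f_{j_l}(ȳ)) + ∇f(ȳ)` if `I = 0`
is unbiased and satisfies
`E‖∇̂f(y) - ∇f(y)‖² ≤ (2(1 - 1/p)/(bn)) [Σ_i ‖∇f_i(y) - ∇f_i(x⋆)‖²
  + Σ_i ‖∇f_i(ȳ) - ∇f_i(x⋆)‖²]`. -/
theorem svrg_growth_condition
    {d : ℕ} (n : ℕ) (hn : 0 < n)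
    (g : Fin n → EuclideanSpace ℝ (Fin d) → ℝ)
    (g' : Fin n → EuclideanSpace ℝ (Fin d) → EuclideanSpace ℝ (Fin d))
    (hgrad : ∀ i u, HasGradientAt (g i) (g' i u) u)
    (f : EuclideanSpace ℝ (Fin d) → ℝ)
    (hf : ∀ u, f u = (n : ℝ)⁻¹ * ∑ i, g i u)
    (p : ℝ) (hp : 1 ≤ p)
    (y ybar xstar : EuclideanSpace ℝ (Fin d))
    (b : ℕ) (hb : 1 ≤ b) :
    (1 / p) • ((n : ℝ)⁻¹ • ∑ i, g' i y)
        + (1 - 1 / p) • (((n : ℝ) ^ b)⁻¹ • ∑ σ : Fin b → Fin n,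
            ((b : ℝ)⁻¹ • (∑ l, (g' (σ l) y - g' (σ l) ybar))
              + (n : ℝ)⁻¹ • ∑ i, g' i ybar))
      = (n : ℝ)⁻¹ • ∑ i, g' i y ∧
    1 / p * ‖(n : ℝ)⁻¹ • (∑ i, g' i y) - (n : ℝ)⁻¹ • ∑ i, g' i y‖ ^ 2
        + (1 - 1 / p) * (((n : ℝ) ^ b)⁻¹ *
            ∑ σ : Fin b → Fin n,
              ‖((b : ℝ)⁻¹ • (∑ l, (g' (σ l) y - g' (σ l) ybar))
                  + (n : ℝ)⁻¹ • ∑ i, g' i ybar) - (n : ℝ)⁻¹ • ∑ i, g' i y‖ ^ 2) ≤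
      2 * (1 - 1 / p) / (b * n) *
        ((∑ i, ‖g' i y - g' i xstar‖ ^ 2) + ∑ i, ‖g' i ybar - g' i xstar‖ ^ 2) := by
  have hn0 : (n : ℝ) ≠ 0 := by positivity
  have hnp : (0 : ℝ) < n := by positivity
  have hbp : (0 : ℝ) < b := by exact_mod_cast hb
  have hb0 : (b : ℝ) ≠ 0 := hbp.ne'
  set my := (n : ℝ)⁻¹ • ∑ i, g' i y with hmy
  set mb := (n : ℝ)⁻¹ • ∑ i, g' i ybar with hmb
  have e1 : ∑ i, g' i y = (n : ℝ) • my := by rw [hmy, smul_inv_smul₀ hn0]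
  have e2 : ∑ i, g' i ybar = (n : ℝ) • mb := by rw [hmb, smul_inv_smul₀ hn0]
  obtain ⟨z, hzdef⟩ : ∃ z : Fin n → EuclideanSpace ℝ (Fin d),
      ∀ i, z i = g' i y - g' i ybar - (my - mb) := ⟨_, fun _ => rfl⟩
  have hz : ∑ i, z i = 0 := by
    simp only [hzdef, Finset.sum_sub_distrib, e1, e2, Finset.sum_const, Finset.card_univ,
      Fintype.card_fin, ← Nat.cast_smul_eq_nsmul ℝ]
    module
  have key : ∀ σ : Fin b → Fin n,
      ((b : ℝ)⁻¹ • (∑ l, (g' (σ l) y - g' (σ l) ybar)) + mb)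
        = (b : ℝ)⁻¹ • (∑ l, z (σ l)) + my := by
    intro σ
    have : ∑ l, (g' (σ l) y - g' (σ l) ybar) = ∑ l, z (σ l) + (b : ℝ) • (my - mb) := by
      simp only [hzdef, Finset.sum_sub_distrib, Finset.sum_const, Finset.card_univ,
        Fintype.card_fin, ← Nat.cast_smul_eq_nsmul ℝ]
      module
    rw [this, smul_add, inv_smul_smul₀ hb0]
    abel
  simp only [key]
  constructor
  · rw [Finset.sum_add_distrib, ← Finset.smul_sum, svrg_first z hz b]
    simp only [Finset.sum_const, Finset.card_univ, Fintype.card_fin, Fintype.card_pi,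
      Finset.prod_const, ← Nat.cast_smul_eq_nsmul ℝ, smul_zero, zero_add]
    push_cast
    rw [inv_smul_smul₀ (pow_ne_zero _ hn0)]
    module
  · have hq : 0 ≤ 1 - 1 / p := by
      have : 1 / p ≤ 1 := by rw [div_le_one (by linarith)]; exact hp
      linarith
    simp only [add_sub_cancel_right, sub_self, norm_zero, norm_smul, mul_pow, ← Finset.mul_sum]
    have h2 := svrg_second z hz b
    have h3 : ∑ i, ‖z i‖ ^ 2 ≤ 2 * ((∑ i, ‖g' i y - g' i xstar‖ ^ 2)
        + ∑ i, ‖g' i ybar - g' i xstar‖ ^ 2) := by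
      refine (svrg_var z hz (my - mb)).trans ?_
      rw [← Finset.sum_add_distrib, Finset.mul_sum]
      refine Finset.sum_le_sum fun i _ => ?_
      rw [hzdef, sub_add_cancel]
      exact svrg_two _ _ _
    have h4 : ∑ σ : Fin b → Fin n, ‖∑ l, z (σ l)‖ ^ 2
        = b * (n : ℝ) ^ b * (∑ i, ‖z i‖ ^ 2) / n := by
      rw [← h2]; field_simp
    rw [h4]
    calc _ = (1 - 1 / p) / (b * n) * ∑ i, ‖z i‖ ^ 2 := by
          rw [norm_inv, Real.norm_natCast]
          generalize 1 - 1 / p = q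
          field_simp
          ring
      _ ≤ (1 - 1 / p) / (b * n) * _ := mul_le_mul_of_nonneg_left h3 (by positivity)
      _ = _ := by ring
end

section
/- Let d ≥ 1, let Σ be a symmetric positive-definite real d×d matrix satisfying m·I ⪯ Σ ⪯ L·I for constants 0 < m ≤ L (in the positive-semidefinite order), let a be a centered Gaussian random vector in ℝ^d with covariance matrix Σ, and let u ∈ ℝ^d. Then E‖(a·aᵀ − Σ)·u‖² ≤ (d·L/m + 1)·‖Σ·u‖². -/
open MeasureTheory ProbabilityTheory Matrix
open scoped InnerProductSpace

lemma gls_deriv_step (v : ℝ) (p p' : ℝ → ℝ) (hp : ∀ t, HasDerivAt p (p' t) t) :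
    deriv (fun t => p t * Real.exp (v * t ^ 2 / 2)) =
      fun t => (p' t + p t * (v * t)) * Real.exp (v * t ^ 2 / 2) := by
  funext t
  have h1 : HasDerivAt (fun t : ℝ => v * t ^ 2 / 2) (v * t) t := by
    have := (((hasDerivAt_id t).pow 2).const_mul v).div_const 2
    refine this.congr_deriv ?_
    simp; ring
  rw [((hp t).fun_mul h1.exp).deriv]
  ring

lemma gls_fourth (v : NNReal) : ∫ x, x ^ 4 ∂(gaussianReal 0 v) = 3 * (v : ℝ) ^ 2 := by
  have h := iteratedDeriv_mgf_zero (X := id) (μ := gaussianReal 0 v) (by simp) 4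
  rw [mgf_id_gaussianReal] at h
  have h0 : (fun t : ℝ => Real.exp (0 * t + v * t ^ 2 / 2)) =
      fun t => (fun _ => (1 : ℝ)) t * Real.exp ((v : ℝ) * t ^ 2 / 2) := by
    funext t; simp
  have e : ∀ (c : ℝ) (n : ℕ) (t : ℝ),
      HasDerivAt (fun t : ℝ => c * t ^ n) (c * (n * t ^ (n - 1))) t := fun c n t =>
    (hasDerivAt_pow n t).const_mul c
  rw [h0, iteratedDeriv_succ', iteratedDeriv_succ', iteratedDeriv_succ', iteratedDeriv_succ',
    iteratedDeriv_zero,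
    gls_deriv_step v _ (fun _ => 0) (fun t => hasDerivAt_const t _),
    gls_deriv_step v _ (fun _ => v)
      (fun t => (by simpa using e v 1 t :
        HasDerivAt (fun t : ℝ => (v : ℝ) * t) v t).congr_of_eventuallyEq (by simp)),
    gls_deriv_step v _ (fun t => v ^ 2 * (2 * t))
      (fun t => (((e (v ^ 2) 2 t).const_add (v : ℝ)).congr_deriv (by simp)).congr_of_eventuallyEq
        (Filter.Eventually.of_forall fun s => by simp; ring)),
    gls_deriv_step v _ (fun t => 3 * v ^ 2 + v ^ 3 * (3 * t ^ 2))
      (fun t => (((e (3 * v ^ 2) 1 t).add (e (v ^ 3) 3 t)).congr_deriv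
        (by simp)).congr_of_eventuallyEq
        (Filter.Eventually.of_forall fun s => by simp; ring))] at h
  simp at h
  exact h.symm

lemma gls_second (v : NNReal) : ∫ x, x ^ 2 ∂(gaussianReal 0 v) = (v : ℝ) := by
  have h := variance_eq_sub (memLp_id_gaussianReal (μ := 0) (v := v) 2)
  rw [variance_id_gaussianReal] at h
  simp at h
  exact h.symm

theorem gaussian_least_squares_growth
    (d : ℕ) (hd : 1 ≤ d)
    (Sig : Matrix (Fin d) (Fin d) ℝ) (hSig : Sig.PosDef)
    (m L : ℝ) (hm : 0 < m) (hmL : m ≤ L)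
    (hlower : (Sig - m • (1 : Matrix (Fin d) (Fin d) ℝ)).PosSemidef)
    (hupper : ((L • (1 : Matrix (Fin d) (Fin d) ℝ)) - Sig).PosSemidef)
    {Ω : Type*} [MeasurableSpace Ω] (μ : Measure Ω) [IsProbabilityMeasure μ]
    (a : Ω → EuclideanSpace ℝ (Fin d)) (ha : AEMeasurable a μ)
    (hgauss : ∀ u : EuclideanSpace ℝ (Fin d),
      Measure.map (fun ω => ⟪a ω, u⟫_ℝ) μ =
        gaussianReal 0 (Real.toNNReal ⟪Sig.toEuclideanLin u, u⟫_ℝ)) :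
    ∀ u : EuclideanSpace ℝ (Fin d),
      ∫ ω, ‖⟪a ω, u⟫_ℝ • a ω - Sig.toEuclideanLin u‖ ^ 2 ∂μ ≤
        ((d : ℝ) * L / m + 1) * ‖Sig.toEuclideanLin u‖ ^ 2 := by
  intro u
  set S := Sig.toEuclideanLin with hS
  have hsymm : ∀ x y, ⟪S x, y⟫_ℝ = ⟪S y, x⟫_ℝ := fun x y => by
    have := (Matrix.isSymmetric_toEuclideanLin_iff.2 hSig.isHermitian) x y
    rw [this, real_inner_comm]
  have hlow : ∀ x, m * ‖x‖ ^ 2 ≤ ⟪S x, x⟫_ℝ := fun x => by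
    have := (Matrix.isPositive_toEuclideanLin_iff.2 hlower).re_inner_nonneg_left x
    simp [inner_sub_left, inner_smul_left] at this
    simpa [hS] using this
  have hup : ∀ x, ⟪S x, x⟫_ℝ ≤ L * ‖x‖ ^ 2 := fun x => by
    have := (Matrix.isPositive_toEuclideanLin_iff.2 hupper).re_inner_nonneg_left x
    simp [inner_sub_left, inner_smul_left] at this
    simpa [hS] using this
  have hq : ∀ x, 0 ≤ ⟪S x, x⟫_ℝ := fun x => le_trans (by positivity) (hlow x)
  have hmeas : ∀ w, AEMeasurable (fun ω => ⟪a ω, w⟫_ℝ) μ := fun w => by fun_prop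
  have hLp : ∀ w, MemLp (fun ω => ⟪a ω, w⟫_ℝ) 4 μ := fun w => by
    have h := memLp_id_gaussianReal' (μ := 0) (v := Real.toNNReal ⟪S w, w⟫_ℝ) 4 (by simp)
    rw [← hgauss w] at h
    exact (memLp_map_measure_iff (by fun_prop) (hmeas w)).1 h
  have hI4 : ∀ w, Integrable (fun ω => ⟪a ω, w⟫_ℝ ^ 4) μ := fun w => by
    have := (hLp w).integrable_norm_pow (p := 4) (by norm_num)
    refine this.congr (Filter.Eventually.of_forall fun ω => ?_)
    simp [Even.pow_abs (show Even 4 by decide)]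
  have hI2 : ∀ w, Integrable (fun ω => ⟪a ω, w⟫_ℝ ^ 2) μ := fun w => 
    ((hLp w).mono_exponent (p := 2) (by norm_num)).integrable_sq
  have hE4 : ∀ w, ∫ ω, ⟪a ω, w⟫_ℝ ^ 4 ∂μ = 3 * ⟪S w, w⟫_ℝ ^ 2 := fun w => by
    have h := gls_fourth (Real.toNNReal ⟪S w, w⟫_ℝ)
    rw [← hgauss w, integral_map (hmeas w) (by fun_prop), Real.coe_toNNReal _ (hq w)] at h
    exact h
  have hE2 : ∀ w, ∫ ω, ⟪a ω, w⟫_ℝ ^ 2 ∂μ = ⟪S w, w⟫_ℝ := fun w => by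
    have h := gls_second (Real.toNNReal ⟪S w, w⟫_ℝ)
    rw [← hgauss w, integral_map (hmeas w) (by fun_prop), Real.coe_toNNReal _ (hq w)] at h
    exact h
  -- mixed moment
  have key : ∀ v, Integrable (fun ω => (⟪a ω, u⟫_ℝ * ⟪a ω, v⟫_ℝ - ⟪S u, v⟫_ℝ) ^ 2) μ ∧
      ∫ ω, (⟪a ω, u⟫_ℝ * ⟪a ω, v⟫_ℝ - ⟪S u, v⟫_ℝ) ^ 2 ∂μ =
        ⟪S u, u⟫_ℝ * ⟪S v, v⟫_ℝ + ⟪S u, v⟫_ℝ ^ 2 := fun v => by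
    set B := ⟪S u, v⟫_ℝ with hB
    have hpt : (fun ω => (⟪a ω, u⟫_ℝ * ⟪a ω, v⟫_ℝ - B) ^ 2) = fun ω =>
        (1 / 12) * ⟪a ω, u + v⟫_ℝ ^ 4 + (1 / 12) * ⟪a ω, u - v⟫_ℝ ^ 4
          + (-1 / 6) * ⟪a ω, u⟫_ℝ ^ 4 + (-1 / 6) * ⟪a ω, v⟫_ℝ ^ 4
          + (-B / 2) * ⟪a ω, u + v⟫_ℝ ^ 2 + (B / 2) * ⟪a ω, u - v⟫_ℝ ^ 2 + B ^ 2 := by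
      funext ω
      rw [inner_add_right, inner_sub_right]; ring
    have i1 := (hI4 (u + v)).const_mul (1 / 12)
    have i2 := i1.fun_add ((hI4 (u - v)).const_mul (1 / 12))
    have i3 := i2.fun_add ((hI4 u).const_mul (-1 / 6))
    have i4 := i3.fun_add ((hI4 v).const_mul (-1 / 6))
    have i5 := i4.fun_add ((hI2 (u + v)).const_mul (-B / 2))
    have i6 := i5.fun_add ((hI2 (u - v)).const_mul (B / 2))
    have i7 := i6.fun_add (integrable_const (μ := μ) (B ^ 2))
    rw [hpt]
    refine ⟨i7, ?_⟩
    rw [integral_add i6 (integrable_const _), integral_add i5 ((hI2 (u - v)).const_mul (B / 2)),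
      integral_add i4 ((hI2 (u + v)).const_mul (-B / 2)),
      integral_add i3 ((hI4 v).const_mul (-1 / 6)),
      integral_add i2 ((hI4 u).const_mul (-1 / 6)),
      integral_add i1 ((hI4 (u - v)).const_mul (1 / 12))]
    simp only [integral_const_mul, hE4, hE2, integral_const, probReal_univ, one_smul]
    simp only [map_add, map_sub, inner_add_left, inner_add_right, inner_sub_left,
      inner_sub_right, hsymm v u, ← hB]
    ring
  let e := EuclideanSpace.basisFun (Fin d) ℝ
  have hcoord : ∀ (x : EuclideanSpace ℝ (Fin d)) i, ⟪x, e i⟫_ℝ = x i := fun x i => by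
    simp [e, EuclideanSpace.inner_single_right]
  have hnorm : ∀ x : EuclideanSpace ℝ (Fin d), ‖x‖ ^ 2 = ∑ i, ⟪x, e i⟫_ℝ ^ 2 := fun x => by
    rw [EuclideanSpace.real_norm_sq_eq]; simp only [hcoord]
  have hint : ∫ ω, ‖⟪a ω, u⟫_ℝ • a ω - S u‖ ^ 2 ∂μ =
      ⟪S u, u⟫_ℝ * ∑ i, ⟪S (e i), e i⟫_ℝ + ‖S u‖ ^ 2 := by
    rw [hnorm (S u), Finset.mul_sum, ← Finset.sum_add_distrib]
    simp only [hnorm (_ - _), inner_sub_left, real_inner_smul_left]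
    rw [integral_finsetSum _ fun i _ => (key (e i)).1]
    exact Finset.sum_congr rfl fun i _ => (key (e i)).2
  have htr : ∑ i, ⟪S (e i), e i⟫_ℝ ≤ d * L := by
    calc _ ≤ ∑ i : Fin d, L := Finset.sum_le_sum fun i _ => by simpa using hup (e i)
      _ = _ := by simp
  have hmu : m * ⟪S u, u⟫_ℝ ≤ ‖S u‖ ^ 2 := by
    have hcs := real_inner_le_norm (S u) u
    have h1 := hlow u
    have : m * ‖u‖ ≤ ‖S u‖ := by
      by_cases h : ‖u‖ = 0
      · rw [h]; simp
      · have : 0 < ‖u‖ := lt_of_le_of_ne (norm_nonneg _) (Ne.symm h)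
        nlinarith
    nlinarith [norm_nonneg (S u)]
  have hdL : 0 ≤ (d : ℝ) * L := by
    have : 0 ≤ L := hm.le.trans hmL
    positivity
  rw [hint, add_mul, one_mul]
  refine add_le_add ?_ le_rfl
  calc _ ≤ ⟪S u, u⟫_ℝ * (d * L) := mul_le_mul_of_nonneg_left htr (hq u)
    _ = d * L / m * (m * ⟪S u, u⟫_ℝ) := by field_simp
    _ ≤ _ := mul_le_mul_of_nonneg_left hmu (by positivity)
end
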